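/- Let T be a compactly generated triangulated category with a pre-generating sequence G = {G^n}_{n∈ℤ} and an extended good metric R such that for every n ∈ ℤ one has Hom(G^n, R_i) = 0 for all sufficiently large i. Then: (1) ∩_{i∈ℤ} R_i = {0}; and (2) if E_1 → E_2 → E_3 → ⋯ is a sequence in T with compatible maps to an object F such that for each n ∈ ℤ one has Cone(E_i → F) ∈ R_n for all sufficiently large i, then the non-canonical map Hocolim E_n → F is an isomorphism. -/

import Mathlib

namespace GApprox

open CategoryTheory CategoryTheory.Limits CategoryTheory.Pretriangulated

universe w v u

variable (C : Type u) [Category.{v} C] [HasZeroObject C] [HasShift C ℤ]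
  [Preadditive C] [∀ n : ℤ, (shiftFunctor C n).Additive] [Pretriangulated C]
  [HasCoproducts.{v} C]

/-- The right orthogonal of a class of objects. -/
def rOrth (A : Set C) : Set C := {X | ∀ a ∈ A, ∀ f : a ⟶ X, f = 0}

/-- The left orthogonal of a class of objects. -/
def lOrth (A : Set C) : Set C := {X | ∀ a ∈ A, ∀ f : X ⟶ a, f = 0}

/-- `Hom(A, B) = 0`. -/
def homZero (A B : Set C) : Prop := ∀ a ∈ A, ∀ b ∈ B, ∀ f : a ⟶ b, f = 0

/-- The star operation `A ⋆ B`: objects `Y` admitting a distinguished triangle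
`X ⟶ Y ⟶ Z ⟶ ΣX` with `X ∈ A` and `Z ∈ B`. -/
def starSet (A B : Set C) : Set C :=
  {Y | ∃ (X Z : C) (f : X ⟶ Y) (g : Y ⟶ Z) (h : Z ⟶ X⟦(1 : ℤ)⟧),
    Triangle.mk f g h ∈ (distTriang C) ∧ X ∈ A ∧ Z ∈ B}

/-- The (strictly full) shift `Σⁿ A` of a class of objects. -/
def shiftSet (n : ℤ) (A : Set C) : Set C :=
  {X | ∃ a ∈ A, Nonempty (X ≅ (shiftFunctor C n).obj a)}

/-- An object is compact if any map to a coproduct factors through a finite subcoproduct. -/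
def IsCompactObj (X : C) : Prop :=
  ∀ (α : Type v) (f : α → C) (g : X ⟶ ∐ f),
    ∃ (s : Finset α) (h : X ⟶ ∐ (fun i : {a : α // a ∈ s} => f i.1)),
      g = h ≫ Sigma.desc (fun i => Sigma.ι f i.1)

/-- The class of compact objects `T^c`. -/
def compacts : Set C := {X | IsCompactObj C X}

/-- The category is compactly generated. -/
def CompactlyGenerated : Prop :=
  ∀ X : C, (∀ K ∈ compacts C, ∀ f : K ⟶ X, f = 0) → IsZero X

/-- Closure under direct summands (retracts), `smd`. -/
def smd (A : Set C) : Set C :=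
  {X | ∃ Y ∈ A, ∃ (i : X ⟶ Y) (r : Y ⟶ X), i ≫ r = 𝟙 X}

/-- Closure of a class of objects under finite direct sums and extensions (`coprod`). -/
inductive extClosure (U : Set C) : C → Prop
  | of {X : C} : X ∈ U → extClosure U X
  | zero {X : C} : IsZero X → extClosure U X
  | ext {X Y Z : C} (f : X ⟶ Y) (g : Y ⟶ Z) (h : Z ⟶ X⟦(1 : ℤ)⟧) :
      Triangle.mk f g h ∈ (distTriang C) → extClosure U X → extClosure U Z → extClosure U Y

/-- Closure of a class of objects under arbitrary coproducts, extensions and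
direct summands. -/
inductive bigClosure (U : Set C) : C → Prop
  | of {X : C} : X ∈ U → bigClosure U X
  | zero {X : C} : IsZero X → bigClosure U X
  | coprod {α : Type v} (f : α → C) :
      (∀ i, bigClosure U (f i)) → ∀ {X : C}, (X ≅ ∐ f) → bigClosure U X
  | ext {X Y Z : C} (f : X ⟶ Y) (g : Y ⟶ Z) (h : Z ⟶ X⟦(1 : ℤ)⟧) :
      Triangle.mk f g h ∈ (distTriang C) → bigClosure U X → bigClosure U Z → bigClosure U Y
  | retract {X Y : C} (i : X ⟶ Y) (r : Y ⟶ X) :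
      i ≫ r = 𝟙 X → bigClosure U Y → bigClosure U X

/-- Closure of a class of objects under finite direct sums, `add`. -/
def addClosure (U : Set C) : Set C :=
  {X | ∃ (n : ℕ) (f : ULift.{v} (Fin n) → C), (∀ i, f i ∈ U) ∧ Nonempty (X ≅ ∐ f)}

/-- Closure of a class of objects under arbitrary coproducts, `Add`. -/
def bigAddClosure (U : Set C) : Set C :=
  {X | ∃ (α : Type v) (f : α → C), (∀ i, f i ∈ U) ∧ Nonempty (X ≅ ∐ f)}

/-- `coprod_n(U)`. -/
def coprodPow (U : Set C) : ℕ → Set C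
  | 0 => {X | IsZero X}
  | n + 1 => starSet C (addClosure C U) (coprodPow U n)

/-- `Coprod_n(U)`. -/
def coprodPowBig (U : Set C) : ℕ → Set C
  | 0 => {X | IsZero X}
  | n + 1 => starSet C (bigAddClosure C U) (coprodPowBig U n)

/-- `G[a,b] = ∪ { G^m : a ≤ m ≤ b }`. -/
def unionIcc (G : ℤ → Set C) (a b : ℤ) : Set C := ⋃ m ∈ Set.Icc a b, G m

/-- `G(-∞,b] = ∪ { G^m : m ≤ b }`. -/
def unionIic (G : ℤ → Set C) (b : ℤ) : Set C := ⋃ m ∈ Set.Iic b, G m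

/-- `G(-∞,∞) = ∪ { G^m : m ∈ ℤ }`. -/
def unionAll (G : ℤ → Set C) : Set C := ⋃ m : ℤ, G m

/-- `G^{[a,b]} = smd(coprod(G[a,b]))`. -/
def gInt (G : ℤ → Set C) (a b : ℤ) : Set C :=
  smd C {X | extClosure C (unionIcc C G a b) X}

/-- `G^{(-∞,b]} = smd(coprod(G(-∞,b]))`. -/
def gIic (G : ℤ → Set C) (b : ℤ) : Set C :=
  smd C {X | extClosure C (unionIic C G b) X}

/-- `G^{[a,b]}_k = smd(coprod_k(G[a,b]))`. -/
def gIntPow (G : ℤ → Set C) (a b k : ℤ) : Set C :=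
  smd C (coprodPow C (unionIcc C G a b) k.toNat)

/-- `Ḡ^{[a,b]}`. -/
def gBarInt (G : ℤ → Set C) (a b : ℤ) : Set C :=
  {X | bigClosure C (unionIcc C G a b) X}

/-- `Ḡ^{(-∞,b]}`. -/
def gBarIic (G : ℤ → Set C) (b : ℤ) : Set C :=
  {X | bigClosure C (unionIic C G b) X}

/-- `Ḡ^{[a,b]}_k = smd(Coprod_k(G[a,b]))`. -/
def gBarIntPow (G : ℤ → Set C) (a b k : ℤ) : Set C :=
  smd C (coprodPowBig C (unionIcc C G a b) k.toNat)

/-- `M^G_n := G^{(-∞,-n]}`. -/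
def MG (G : ℤ → Set C) (n : ℤ) : Set C := gIic C G (-n)

/-- `R^G_n := ⊥((M^G_n)^⊥)`, orthogonals taken in the whole category. -/
def RG (G : ℤ → Set C) (n : ℤ) : Set C := lOrth C (rOrth C (MG C G n))

/-- A pre-generating sequence. -/
structure IsPreGenSeq (G : ℤ → Set C) : Prop where
  compact : ∀ i : ℤ, G i ⊆ compacts C
  generates : smd C {X | extClosure C (unionAll C G) X} = compacts C

/-- A generating sequence. -/
structure IsGenSeq (G : ℤ → Set C) extends IsPreGenSeq C G : Prop where
  shift_cond : ∀ n : ℤ,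
    shiftSet C (-1) (G n) ∪ G n ∪ shiftSet C 1 (G n) ⊆ gInt C G (n - 1) (n + 1)

/-- A finite generating sequence. -/
structure IsFinGenSeq (G : ℤ → Set C) extends IsGenSeq C G : Prop where
  finite : ∀ i : ℤ, (G i).Finite

/-- ℕ-equivalence of generating sequences. -/
def GenSeqNEquiv (G G' : ℤ → Set C) : Prop :=
  ∃ N : ℤ, 0 ≤ N ∧ (∀ n : ℤ, G' n ⊆ gInt C G (n - N) (n + N)) ∧
    ∀ n : ℤ, G n ⊆ gInt C G' (n - N) (n + N)

/-- ℕ-equivalence of (extended good) metrics. -/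
def MetricNEquiv (M N : ℤ → Set C) : Prop :=
  ∃ n : ℤ, 0 ≤ n ∧ (∀ i : ℤ, M (i + n) ⊆ N i) ∧ ∀ i : ℤ, N (i + n) ⊆ M i

/-- An extended good metric. -/
structure IsExtGoodMetric (M : ℤ → Set C) : Prop where
  zero_mem : ∀ (n : ℤ) (X : C), IsZero X → X ∈ M n
  iso_closed : ∀ (n : ℤ) ⦃X Y : C⦄, (X ≅ Y) → X ∈ M n → Y ∈ M n
  star_subset : ∀ n : ℤ, starSet C (M n) (M n) ⊆ M n
  shift_one : ∀ n : ℤ, shiftSet C 1 (M (n + 1)) ⊆ M n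
  antitone : ∀ n : ℤ, M (n + 1) ⊆ M n
  shift_neg_one : ∀ n : ℤ, shiftSet C (-1) (M (n + 1)) ⊆ M n

/-- An orthogonal metric. -/
structure IsOrthMetric (M : ℤ → Set C) extends IsExtGoodMetric C M : Prop where
  orth : ∀ n : ℤ, lOrth C (rOrth C (M n)) = M n

/-- The closure of the compacts `T̄^c := ∩ₙ T^c ⋆ Rₙ`. -/
def closCompacts (Rm : ℤ → Set C) : Set C := ⋂ n : ℤ, starSet C (compacts C) (Rm n)

/-- `(T, R, A)` is `G`-preapproximable. -/
structure IsGPreApprox (G Rm : ℤ → Set C) (A : ℤ) : Prop where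
  orthMetric : IsOrthMetric C Rm
  A_pos : 0 < A
  cond0 : ∀ i : ℤ, MG C G i ⊆ ⋃ n ∈ {n : ℤ | |n| ≤ A}, shiftSet C n (MG C G (i + 1))
  cond1 : ∀ i : ℤ, MG C G (i + A) ⊆ Rm i ∩ compacts C
  cond2 : ∀ n : ℤ, ∃ N : ℤ, ∀ i : ℤ, N ≤ i → homZero C (G n) (Rm i)

/-- There is a distinguished triangle `E ⟶ F ⟶ D ⟶ ΣE` with `E ∈ S` and `D ∈ D`. -/
def approxTriangle (F : C) (S D : Set C) : Prop :=
  ∃ (E Dd : C) (f : E ⟶ F) (g : F ⟶ Dd) (h : Dd ⟶ E⟦(1 : ℤ)⟧),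
    Triangle.mk f g h ∈ (distTriang C) ∧ E ∈ S ∧ Dd ∈ D

/-- `(T, R, A)` is weakly `G`-approximable. -/
structure IsWeakGApprox (G Rm : ℤ → Set C) (A : ℤ) extends IsGPreApprox C G Rm A : Prop where
  hom_vanish : ∀ n i : ℤ, A ≤ n + i → homZero C (G n) (Rm i)
  approx : ∀ i : ℤ, ∀ F ∈ Rm i,
    approxTriangle C F (gBarInt C G (-A - i) (A - i)) (Rm (i + 1))

/-- `(T, R, A)` is `G`-approximable. -/
structure IsGApprox (G Rm : ℤ → Set C) (A : ℤ) extends IsWeakGApprox C G Rm A : Prop where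
  approx' : ∀ i : ℤ, ∀ F ∈ Rm i,
    approxTriangle C F (gBarIntPow C G (-A - i) (A - i) A) (Rm (i + 1))

/-- `(T, R, A)` is weakly `G`-quasiapproximable. -/
structure IsWeakGQuasiApprox (G Rm : ℤ → Set C) (A : ℤ) extends IsGPreApprox C G Rm A : Prop where
  hom_vanish : ∀ n i : ℤ, A ≤ n + i → homZero C (G n) (Rm i)
  approx : ∀ i : ℤ, ∀ F ∈ Rm i ∩ closCompacts C Rm,
    approxTriangle C F (gBarInt C G (-A - i) (A - i)) (Rm (i + 1) ∩ closCompacts C Rm)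

/-- `(T, R, A)` is `G`-quasiapproximable. -/
structure IsGQuasiApprox (G Rm : ℤ → Set C) (A : ℤ) extends IsWeakGQuasiApprox C G Rm A : Prop where
  approx' : ∀ i : ℤ, ∀ F ∈ Rm i ∩ closCompacts C Rm,
    approxTriangle C F (gBarIntPow C G (-A - i) (A - i) A) (Rm (i + 1) ∩ closCompacts C Rm)

/-- The coproduct of a sequence of objects. -/
noncomputable def seqCoprod (E : ℕ → C) : C := ∐ (fun n : ULift.{v} ℕ => E n.down)

/-- The canonical inclusion into the coproduct of a sequence. -/
noncomputable def seqInj (E : ℕ → C) (n : ℕ) : E n ⟶ seqCoprod C E :=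
  Sigma.ι (fun n : ULift.{v} ℕ => E n.down) (ULift.up n)

/-- The map `1 - shift` on the coproduct of a sequence. -/
noncomputable def oneMinusShift (E : ℕ → C) (e : ∀ n, E n ⟶ E (n + 1)) :
    seqCoprod C E ⟶ seqCoprod C E :=
  Sigma.desc (fun n => seqInj C E n.down - e n.down ≫ seqInj C E (n.down + 1))

/-- `H`, equipped with `π`, `δ`, is a homotopy colimit of the sequence `E`. -/
def IsHocolim (E : ℕ → C) (e : ∀ n, E n ⟶ E (n + 1)) (H : C)
    (π : seqCoprod C E ⟶ H) (δ : H ⟶ (seqCoprod C E)⟦(1 : ℤ)⟧) : Prop :=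
  Triangle.mk (oneMinusShift C E e) π δ ∈ (distTriang C)

/-- A single compact generator. -/
def IsCompactGenerator (G₀ : C) : Prop :=
  IsCompactObj C G₀ ∧ ∀ X : C, (∀ n : ℤ, ∀ f : (shiftFunctor C n).obj G₀ ⟶ X, f = 0) → IsZero X

/-- The strictly full subcategory `{Σʲ G₀}`. -/
def singletonShift (G₀ : C) (j : ℤ) : Set C :=
  {X | Nonempty (X ≅ (shiftFunctor C j).obj G₀)}

/-- The generating sequence `Gⁿ := {Σ⁻ⁿ G₀}`. -/
def genSeqNeg (G₀ : C) (n : ℤ) : Set C := singletonShift C G₀ (-n)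

/-- The generating sequence `Gⁿ := {Σⁿ G₀}`. -/
def genSeqPos (G₀ : C) (n : ℤ) : Set C := singletonShift C G₀ n

section helpers

variable {C}

theorem tri_yo2 {X Y Z W : C} {f : X ⟶ Y} {g : Y ⟶ Z} {h : Z ⟶ X⟦(1 : ℤ)⟧}
    (hT : Triangle.mk f g h ∈ distTriang C) (k : Y ⟶ W) (hk : f ≫ k = 0) :
    ∃ l : Z ⟶ W, k = g ≫ l := Triangle.yoneda_exact₂ _ hT k hk

theorem tri_co2 {X Y Z W : C} {f : X ⟶ Y} {g : Y ⟶ Z} {h : Z ⟶ X⟦(1 : ℤ)⟧}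
    (hT : Triangle.mk f g h ∈ distTriang C) (k : W ⟶ Y) (hk : k ≫ g = 0) :
    ∃ l : W ⟶ X, k = l ≫ f := Triangle.coyoneda_exact₂ _ hT k hk

theorem tri_co3 {X Y Z W : C} {f : X ⟶ Y} {g : Y ⟶ Z} {h : Z ⟶ X⟦(1 : ℤ)⟧}
    (hT : Triangle.mk f g h ∈ distTriang C) (k : W ⟶ Z) (hk : k ≫ h = 0) :
    ∃ l : W ⟶ Y, k = l ≫ g := Triangle.coyoneda_exact₃ _ hT k hk

theorem tri_co1 {X Y Z W : C} {f : X ⟶ Y} {g : Y ⟶ Z} {h : Z ⟶ X⟦(1 : ℤ)⟧}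
    (hT : Triangle.mk f g h ∈ distTriang C) (k : W ⟶ X) (hk : k ≫ f = 0) :
    ∃ (l : W ⟶ Z⟦(-1 : ℤ)⟧) (r : Z⟦(-1 : ℤ)⟧ ⟶ X), k = l ≫ r := by
  obtain ⟨l, hl⟩ := Triangle.coyoneda_exact₂ _ (inv_rot_of_distTriang _ hT) k hk
  exact ⟨l, _, hl⟩

theorem tri_12 {X Y Z : C} {f : X ⟶ Y} {g : Y ⟶ Z} {h : Z ⟶ X⟦(1 : ℤ)⟧}
    (hT : Triangle.mk f g h ∈ distTriang C) : f ≫ g = 0 := comp_distTriang_mor_zero₁₂ _ hT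

theorem tri_31 {X Y Z : C} {f : X ⟶ Y} {g : Y ⟶ Z} {h : Z ⟶ X⟦(1 : ℤ)⟧}
    (hT : Triangle.mk f g h ∈ distTriang C) : h ≫ f⟦(1 : ℤ)⟧' = 0 :=
  comp_distTriang_mor_zero₃₁ _ hT

theorem seq_ext (E : ℕ → C) {X : C} {a b : seqCoprod C E ⟶ X}
    (h : ∀ n, seqInj C E n ≫ a = seqInj C E n ≫ b) : a = b :=
  Sigma.hom_ext _ _ (fun n => h n.down)

theorem seqInj_oneMinusShift (E : ℕ → C) (e : ∀ n, E n ⟶ E (n + 1)) (n : ℕ) :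
    seqInj C E n ≫ oneMinusShift C E e = seqInj C E n - e n ≫ seqInj C E (n + 1) :=
  Sigma.ι_desc (f := fun n : ULift.{v} ℕ => E n.down)
    (fun n => seqInj C E n.down - e n.down ≫ seqInj C E (n.down + 1)) (ULift.up n)

theorem extClosure_hom_zero (U : Set C) (X : C) (hU : ∀ a ∈ U, ∀ f : a ⟶ X, f = 0)
    (K : C) (hK : extClosure C U K) : ∀ f : K ⟶ X, f = 0 := by
  induction hK with
  | of h => exact hU _ h
  | zero h => intro f; exact h.eq_of_src _ _
  | ext f g h hT _ _ ih1 ih2 =>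
    intro k
    obtain ⟨l, hl⟩ := tri_yo2 hT k (ih1 _)
    rw [hl]
    rw [ih2 l, comp_zero]

theorem extClosure_van (G Rm : ℤ → Set C) 
    (hvan : ∀ n : ℤ, ∃ N : ℤ, ∀ i : ℤ, N ≤ i → homZero C (G n) (Rm i))
    (K : C) (hK : extClosure C (unionAll C G) K) :
    ∃ N : ℤ, ∀ i : ℤ, N ≤ i → ∀ X ∈ Rm i, ∀ f : K ⟶ X, f = 0 := by
  induction hK with
  | of h =>
    obtain ⟨n, hn⟩ := Set.mem_iUnion.1 h
    obtain ⟨N, hN⟩ := hvan n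
    exact ⟨N, fun i hi X hX => hN i hi _ hn X hX⟩
  | zero h => exact ⟨0, fun i _ X _ f => h.eq_of_src _ _⟩
  | ext f g h hT _ _ ih1 ih2 =>
    obtain ⟨N1, h1⟩ := ih1
    obtain ⟨N2, h2⟩ := ih2
    refine ⟨max N1 N2, fun i hi X hX k => ?_⟩
    obtain ⟨l, hl⟩ := tri_yo2 hT k (h1 i (by omega) X hX _)
    rw [hl]
    rw [h2 i (by omega) X hX l, comp_zero]

theorem compact_van (G Rm : ℤ → Set C) (hG : IsPreGenSeq C G)
    (hvan : ∀ n : ℤ, ∃ N : ℤ, ∀ i : ℤ, N ≤ i → homZero C (G n) (Rm i))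
    (K : C) (hK : IsCompactObj C K) :
    ∃ N : ℤ, ∀ i : ℤ, N ≤ i → ∀ X ∈ Rm i, ∀ f : K ⟶ X, f = 0 := by
  have : K ∈ smd C {X | extClosure C (unionAll C G) X} := by rw [hG.generates]; exact hK
  obtain ⟨Y, hY, a, r, har⟩ := this
  obtain ⟨N, hN⟩ := extClosure_van G Rm hvan Y hY
  refine ⟨N, fun i hi X hX f => ?_⟩
  rw [← Category.id_comp f, ← har, Category.assoc, hN i hi X hX (r ≫ f), comp_zero]

open Classical in
/-- Projection from a coproduct. -/
noncomputable def cproj {α : Type v} (f : α → C) (i : α) : ∐ f ⟶ f i :=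
  Sigma.desc (fun j => if h : j = i then eqToHom (by rw [h]) else 0)

theorem ι_cproj_self {α : Type v} (f : α → C) (i : α) : Sigma.ι f i ≫ cproj f i = 𝟙 _ := by
  simp [cproj]

theorem ι_cproj_ne {α : Type v} (f : α → C) {i j : α} (h : j ≠ i) :
    Sigma.ι f j ≫ cproj f i = 0 := by
  simp [cproj, h]

theorem compact_sum (K : C) (hK : IsCompactObj C K) {α : Type v} (f : α → C) (a : K ⟶ ∐ f) :
    ∃ s : Finset α, a = ∑ i ∈ s, a ≫ cproj f i ≫ Sigma.ι f i := by
  obtain ⟨s, h, rfl⟩ := hK α f a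
  refine ⟨s, ?_⟩
  simp only [Category.assoc]
  rw [← Preadditive.comp_sum]
  congr 1
  apply Sigma.hom_ext
  rintro ⟨j, hj⟩
  rw [Preadditive.comp_sum]
  simp only [Sigma.ι_desc_assoc, Sigma.ι_desc]
  rw [Finset.sum_eq_single j]
  · rw [← Category.assoc, ι_cproj_self, Category.id_comp]
  · intro b _ hb
    rw [← Category.assoc, ι_cproj_ne f hb.symm, zero_comp]
  · exact fun h => (h hj).elim

theorem compact_shift (K : C) (hK : IsCompactObj C K) : IsCompactObj C (K⟦(-1 : ℤ)⟧) := by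
  intro α f g
  let e : K ≅ (K⟦(-1 : ℤ)⟧)⟦(1 : ℤ)⟧ := (shiftNegShift K (1 : ℤ)).symm
  obtain ⟨s, h, hh⟩ := hK α (fun i => (f i)⟦(1 : ℤ)⟧)
    (e.hom ≫ g⟦(1 : ℤ)⟧' ≫ inv (sigmaComparison (shiftFunctor C (1 : ℤ)) f))
  refine ⟨s, (shiftFunctor C (1 : ℤ)).preimage (e.inv ≫ h ≫
    sigmaComparison (shiftFunctor C (1 : ℤ)) (fun i : {a : α // a ∈ s} => f i.1)), ?_⟩
  apply (shiftFunctor C (1 : ℤ)).map_injective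
  rw [Functor.map_comp, Functor.map_preimage]
  have h2 : sigmaComparison (shiftFunctor C (1 : ℤ)) (fun i : {a : α // a ∈ s} => f i.1) ≫
      (shiftFunctor C (1 : ℤ)).map (Sigma.desc (fun i => Sigma.ι f i.1)) =
      Sigma.desc (fun i : {a : α // a ∈ s} => Sigma.ι (fun i => (f i)⟦(1 : ℤ)⟧) i.1) ≫
        sigmaComparison (shiftFunctor C (1 : ℤ)) f := by
    apply Sigma.hom_ext
    intro i
    simp 
  rw [Category.assoc, Category.assoc, h2, ← reassoc_of% hh]
  simp

theorem oneMinusShift_inj (E : ℕ → C) (e : ∀ n, E n ⟶ E (n + 1)) (K : C)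
    (hK : IsCompactObj C K) (a : K ⟶ seqCoprod C E) (ha : a ≫ oneMinusShift C E e = 0) :
    a = 0 := by
  let f : ULift.{v} ℕ → C := fun n => E n.down
  let p : ∀ n : ℕ, seqCoprod C E ⟶ E n := fun n => cproj f (ULift.up n)
  have hp1 : ∀ n, seqInj C E n ≫ p n = 𝟙 _ := fun n => ι_cproj_self f _
  have hp2 : ∀ n m, m ≠ n → seqInj C E m ≫ p n = 0 := fun n m h =>
    ι_cproj_ne f (by simpa using h)
  have h0 : oneMinusShift C E e ≫ p 0 = p 0 := by
    apply seq_ext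
    intro n
    rw [← Category.assoc, seqInj_oneMinusShift, Preadditive.sub_comp, Category.assoc, hp2 0 (n+1) (by simp)]
    simp
  have hs : ∀ m, oneMinusShift C E e ≫ p (m + 1) = p (m + 1) - p m ≫ e m := by
    intro m
    apply seq_ext
    intro n
    rw [← Category.assoc, seqInj_oneMinusShift, Preadditive.sub_comp, Category.assoc,
      Preadditive.comp_sub]
    congr 1
    by_cases hnm : n = m
    · subst hnm
      rw [hp1, ← Category.assoc, hp1]; simp
    · rw [hp2 (m+1) (n+1) (by simpa using hnm), ← Category.assoc, hp2 m n hnm]; simp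
  have hz : ∀ n, a ≫ p n = 0 := by
    intro n
    induction n with
    | zero => rw [← h0, ← Category.assoc, ha, zero_comp]
    | succ m ih =>
      have : a ≫ oneMinusShift C E e ≫ p (m + 1) = 0 := by rw [← Category.assoc, ha, zero_comp]
      rw [hs, Preadditive.comp_sub, ← Category.assoc, ih, zero_comp, sub_zero] at this
      exact this
  obtain ⟨s, h⟩ := compact_sum K hK f a
  rw [h]
  apply Finset.sum_eq_zero
  rintro ⟨n⟩ _
  have := hz n
  change a ≫ p n ≫ _ = 0
  rw [← Category.assoc, this, zero_comp]

/-- Maps from a shift. -/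
theorem hom_shift_zero {K X : C} (h : ∀ f : K⟦(-1 : ℤ)⟧ ⟶ X, f = 0) (f : K ⟶ X⟦(1 : ℤ)⟧) :
    f = 0 := by
  have := h (f⟦(-1 : ℤ)⟧' ≫ (shiftShiftNeg X (1 : ℤ)).hom)
  have h2 : f⟦(-1 : ℤ)⟧' = 0 := by
    rw [← cancel_mono (shiftShiftNeg X (1 : ℤ)).hom, this, zero_comp]
  apply (shiftFunctor C (-1 : ℤ)).map_injective
  rw [h2, Functor.map_zero]

theorem hom_shift_inj {K X Y : C} (u : X ⟶ Y) (h : ∀ f : K⟦(-1 : ℤ)⟧ ⟶ X, f ≫ u = 0 → f = 0)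
    (f : K ⟶ X⟦(1 : ℤ)⟧) (hf : f ≫ u⟦(1 : ℤ)⟧' = 0) : f = 0 := by
  have := h (f⟦(-1 : ℤ)⟧' ≫ (shiftShiftNeg X (1 : ℤ)).hom) (by
    have hn : (shiftShiftNeg X (1 : ℤ)).hom ≫ u =
      u⟦(1 : ℤ)⟧'⟦(-1 : ℤ)⟧' ≫ (shiftShiftNeg Y (1 : ℤ)).hom :=
      ((shiftFunctorCompIsoId C (1 : ℤ) (-1) (by simp)).hom.naturality u).symm
    rw [Category.assoc, hn, ← Category.assoc, ← Functor.map_comp, hf, Functor.map_zero, zero_comp])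
  have h2 : f⟦(-1 : ℤ)⟧' = 0 := by
    rw [← cancel_mono (shiftShiftNeg X (1 : ℤ)).hom, this, zero_comp]
  apply (shiftFunctor C (-1 : ℤ)).map_injective
  rw [h2, Functor.map_zero]

theorem hocolim_lift (E : ℕ → C) (e : ∀ n, E n ⟶ E (n + 1)) (H : C)
    (π : seqCoprod C E ⟶ H) (δ : H ⟶ (seqCoprod C E)⟦(1 : ℤ)⟧) (hH : IsHocolim C E e H π δ)
    (K : C) (hK : IsCompactObj C K) (k : K ⟶ H) :
    ∃ M : ℕ, ∀ n, M ≤ n → ∃ y : K ⟶ E n, k = y ≫ seqInj C E n ≫ π := by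
  have hδ : k ≫ δ = 0 := by
    apply hom_shift_inj (oneMinusShift C E e)
      (fun f => oneMinusShift_inj E e _ (compact_shift K hK) f)
    rw [Category.assoc, tri_31 hH, comp_zero]
  obtain ⟨x, hx⟩ := tri_co3 hH k hδ
  have hstep : ∀ n, seqInj C E n ≫ π = e n ≫ seqInj C E (n + 1) ≫ π := by
    intro n
    have h0 := tri_12 hH
    have h1 : seqInj C E n ≫ oneMinusShift C E e =
        seqInj C E n - e n ≫ seqInj C E (n + 1) := seqInj_oneMinusShift E e n
    have h2 : seqInj C E n ≫ oneMinusShift C E e ≫ π = 0 := by rw [h0, comp_zero]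
    rw [← Category.assoc, h1, Preadditive.sub_comp, sub_eq_zero, Category.assoc] at h2
    exact h2
  have hpush : ∀ (n : ℕ) (y : K ⟶ E n) (m : ℕ), n ≤ m →
      ∃ y' : K ⟶ E m, y ≫ seqInj C E n ≫ π = y' ≫ seqInj C E m ≫ π := by
    intro n y m hm
    induction m, hm using Nat.le_induction with
    | base => exact ⟨y, rfl⟩
    | succ m _ ih =>
      obtain ⟨y', hy'⟩ := ih
      exact ⟨y' ≫ e m, by rw [hy', hstep m, Category.assoc]⟩
  obtain ⟨s, hs⟩ := compact_sum K hK (fun n : ULift.{v} ℕ => E n.down) x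
  have key : ∀ (s : Finset (ULift.{v} ℕ)) (z : ∀ i : ULift.{v} ℕ, K ⟶ E i.down),
      ∃ M : ℕ, ∀ n, M ≤ n → ∃ y : K ⟶ E n,
        ∑ i ∈ s, z i ≫ seqInj C E i.down ≫ π = y ≫ seqInj C E n ≫ π := by
    classical
    intro s z
    induction s using Finset.induction_on with
    | empty => exact ⟨0, fun n _ => ⟨0, by simp⟩⟩
    | insert a s ha ih =>
      obtain ⟨M, hM⟩ := ih
      refine ⟨max M a.down, fun n hn => ?_⟩
      obtain ⟨y, hy⟩ := hM n (by omega)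
      obtain ⟨y', hy'⟩ := hpush a.down (z a) n (by omega)
      refine ⟨y' + y, ?_⟩
      rw [Finset.sum_insert ha, hy, hy', Preadditive.add_comp]
  obtain ⟨M, hM⟩ := key s (fun i => x ≫ cproj (fun n : ULift.{v} ℕ => E n.down) i)
  refine ⟨M, fun n hn => ?_⟩
  obtain ⟨y, hy⟩ := hM n hn
  refine ⟨y, ?_⟩
  rw [← hy, hx]
  conv_lhs => rw [hs]
  refine (Preadditive.sum_comp _ _ _).trans (Finset.sum_congr rfl fun i _ => ?_)
  have key2 : ∀ {A B D : C} (x : K ⟶ A) (p : A ⟶ B) (q : B ⟶ D) (r : D ⟶ H),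
      (x ≫ p ≫ q) ≫ r = (x ≫ p) ≫ q ≫ r := by
    intros; simp only [Category.assoc]
  exact key2 x (cproj (fun n : ULift.{v} ℕ => E n.down) i) (seqInj C E i.down) π

end helpers

theorem statement_8 (G Rm : ℤ → Set C)
    (hcg : CompactlyGenerated C) (hG : IsPreGenSeq C G) (hR : IsExtGoodMetric C Rm)
    (hvan : ∀ n : ℤ, ∃ N : ℤ, ∀ i : ℤ, N ≤ i → homZero C (G n) (Rm i)) :
    ((⋂ i : ℤ, Rm i) = {X : C | IsZero X}) ∧
    ∀ (E : ℕ → C) (e : ∀ n, E n ⟶ E (n + 1)) (F : C) (φ : ∀ n, E n ⟶ F),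
      (∀ n, e n ≫ φ (n + 1) = φ n) →
      (∀ m : ℤ, ∃ N : ℕ, ∀ i : ℕ, N ≤ i →
        ∃ (D : C) (g : F ⟶ D) (h : D ⟶ (E i)⟦(1 : ℤ)⟧),
          Triangle.mk (φ i) g h ∈ (distTriang C) ∧ D ∈ Rm m) →
      ∀ (H : C) (π : seqCoprod C E ⟶ H) (δ : H ⟶ (seqCoprod C E)⟦(1 : ℤ)⟧),
        IsHocolim C E e H π δ →
        ∀ h : H ⟶ F, (∀ n, seqInj C E n ≫ π ≫ h = φ n) → IsIso h := by
  refine ⟨?_, ?_⟩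
  · ext X
    simp only [Set.mem_iInter, Set.mem_ofPred_eq]
    refine ⟨fun hX => hcg X fun K hK f => ?_, fun hX i => hR.zero_mem i X hX⟩
    obtain ⟨N, hN⟩ := compact_van G Rm hG hvan K hK
    exact hN N le_rfl X (hX N) f
  · intro E e F φ hφ hcone H π δ hH h hh
    have hinj : ∀ K, IsCompactObj C K → ∀ k : K ⟶ H, k ≫ h = 0 → k = 0 := by
      intro K hK k hk
      obtain ⟨N, hN⟩ := compact_van G Rm hG hvan K hK
      obtain ⟨M, hM⟩ := hocolim_lift E e H π δ hH K hK k
      obtain ⟨M', hM'⟩ := hcone (N + 1)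
      obtain ⟨y, hy⟩ := hM (max M M') (le_max_left _ _)
      obtain ⟨D, g, d, hT, hD⟩ := hM' (max M M') (le_max_right _ _)
      have hyφ : y ≫ φ (max M M') = 0 := by
        rw [← hh, ← hk, hy]; simp
      obtain ⟨l, r, hl⟩ := tri_co1 hT y hyφ
      have hl0 : l = 0 := hN N le_rfl _ (hR.shift_neg_one N ⟨D, hD, ⟨Iso.refl _⟩⟩) l
      have : y = 0 := by rw [hl, hl0, zero_comp]
      rw [hy, this, zero_comp]
    have hsurj : ∀ K, IsCompactObj C K → ∀ k : K ⟶ F, ∃ l : K ⟶ H, k = l ≫ h := by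
      intro K hK k
      obtain ⟨N, hN⟩ := compact_van G Rm hG hvan K hK
      obtain ⟨M, hM⟩ := hcone N
      obtain ⟨D, g, d, hT, hD⟩ := hM M le_rfl
      obtain ⟨l, hl⟩ := tri_co2 hT k (hN N le_rfl _ hD _)
      refine ⟨l ≫ seqInj C E M ≫ π, ?_⟩
      rw [Category.assoc, Category.assoc, hh]
      exact hl
    obtain ⟨Z, g, d, hT⟩ := distinguished_cocone_triangle h
    have hZ : IsZero Z := by
      refine hcg Z fun K hK k => ?_
      have h1 : k ≫ d = 0 := by
        apply hom_shift_inj h (hinj _ (compact_shift K hK))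
        rw [Category.assoc, tri_31 hT, comp_zero]
      obtain ⟨l, hl⟩ := tri_co3 hT k h1
      obtain ⟨m, hm⟩ := hsurj K hK l
      rw [hl, hm, Category.assoc, tri_12 hT, comp_zero]
    exact (Triangle.isZero₃_iff_isIso₁ _ hT).1 hZ

end GApprox
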